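/- arXiv:1210.5097 — 4 statements merged into one kernel-verified Lean document; each statement's English description precedes it below -/
import Mathlib

section
/- Let 𝔨 be a real Lie algebra, K₀ ⊆ 𝔨 a Lie subalgebra, and V ⊆ 𝔨 a linear subspace such that ⁅Z, Y⁆ ∈ V + K₀ for every Z ∈ K₀ and every Y ∈ V. Define subspaces K_j (j ≥ 0) by K_0 := K₀ and, for j ≥ 1, K_j := {Z ∈ K₀ : ⁅Z, Y⁆ ∈ K_{j−1} for all Y ∈ V}. Then for every j ≥ 0 one has ⁅K₀, K_j⁆ ⊆ K_j, i.e. for all Z ∈ K₀ and Z′ ∈ K_j, the bracket ⁅Z, Z′⁆ lies in K_j. -/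
/-!
Passing from `V` to `U = V + K₀` costs nothing: if `K_j` is stable under `K₀`, then every
`Z ∈ K_{j+1} ⊆ K_j` satisfies `⁅Z, K₀⁆ ⊆ K_j`, hence `⁅Z, U⁆ ⊆ K_j`. Unlike `V`, the space `U` is
itself stable under `K₀`, and whenever `U` and `W` are stable under `X`, the Jacobi identity
`⁅⁅X, Z⁆, Y⁆ = ⁅X, ⁅Z, Y⁆⁆ - ⁅Z, ⁅X, Y⁆⁆` shows that so is `{Z | ⁅Z, U⁆ ⊆ W}`.
-/

/-- The Killing filtration: `K 0 = K₀` and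
`K (j+1) = {Z ∈ K₀ : ⁅Z, Y⁆ ∈ K j for all Y ∈ V}`. -/
def killingFiltration (𝔨 : Type*) [LieRing 𝔨] [LieAlgebra ℝ 𝔨]
    (K₀ : LieSubalgebra ℝ 𝔨) (V : Submodule ℝ 𝔨) : ℕ → Submodule ℝ 𝔨
  | 0 => K₀.toSubmodule
  | (j + 1) =>
    { carrier := {Z | Z ∈ K₀ ∧ ∀ Y ∈ V, ⁅Z, Y⁆ ∈ killingFiltration 𝔨 K₀ V j}
      add_mem' := by
        rintro a b ⟨ha, ha'⟩ ⟨hb, hb'⟩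
        refine ⟨K₀.add_mem ha hb, fun Y hY => ?_⟩
        rw [add_lie]
        exact (killingFiltration 𝔨 K₀ V j).add_mem (ha' Y hY) (hb' Y hY)
      zero_mem' := by
        refine ⟨K₀.zero_mem, fun Y hY => ?_⟩
        rw [zero_lie]
        exact (killingFiltration 𝔨 K₀ V j).zero_mem
      smul_mem' := by
        rintro c a ⟨ha, ha'⟩
        refine ⟨K₀.smul_mem c ha, fun Y hY => ?_⟩
        rw [smul_lie]
        exact (killingFiltration 𝔨 K₀ V j).smul_mem c (ha' Y hY) }

section LieTransporter

variable {R L M : Type*} [CommRing R] [LieRing L] [LieAlgebra R L]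
  [AddCommGroup M] [Module R M] [LieRingModule L M] [LieModule R L M]

variable (L) in
/-- The transporter `{x ∈ L | ⁅x, U⁆ ⊆ W}` of a submodule `U` of a Lie module into a submodule `W`.
In particular, `x ∈ lieTransporter L W W` says that `W` is stable under `x`. -/
def lieTransporter (U W : Submodule R M) : Submodule R L :=
  (U.compatibleMaps W).comap (LieModule.toEnd R L M : L →ₗ[R] Module.End R M)

theorem mem_lieTransporter {U W : Submodule R M} {x : L} :
    x ∈ lieTransporter L U W ↔ ∀ u ∈ U, ⁅x, u⁆ ∈ W :=
  Iff.rfl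

theorem lieTransporter_mono {U U' W W' : Submodule R M} (hU : U' ≤ U) (hW : W ≤ W') :
    lieTransporter L U W ≤ lieTransporter L U' W' :=
  fun _ hx _ hu => hW (hx (hU hu))

theorem lieTransporter_sup (U U' W : Submodule R M) :
    lieTransporter L (U ⊔ U') W = lieTransporter L U W ⊓ lieTransporter L U' W :=
  Submodule.ext fun x => sup_le_iff (c := W.comap (LieModule.toEnd R L M x))

theorem lie_mem_lieTransporter {U W : Submodule R M} {x z : L} (hU : x ∈ lieTransporter L U U)
    (hW : x ∈ lieTransporter L W W) (hz : z ∈ lieTransporter L U W) :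
    ⁅x, z⁆ ∈ lieTransporter L U W := by
  refine mem_lieTransporter.mpr fun u hu => ?_
  rw [lie_lie]
  exact W.sub_mem (hW (hz hu)) (hz (hU hu))

theorem le_lieTransporter_comm {U V W : Submodule R L} :
    U ≤ lieTransporter L V W ↔ V ≤ lieTransporter L U W := by
  have swap {A B : Submodule R L} (h : A ≤ lieTransporter L B W) : B ≤ lieTransporter L A W := by
    refine fun b hb => mem_lieTransporter.mpr fun a ha => ?_
    rw [← lie_skew]
    exact W.neg_mem (h ha hb)
  exact ⟨swap, swap⟩

end LieTransporter

section IsotropyFiltration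

variable {R L : Type*} [CommRing R] [LieRing L] [LieAlgebra R L]

/-- The filtration `K_0 = H`, `K_{j+1} = {Z ∈ H | ⁅Z, V⁆ ⊆ K_j}` of a submodule `H` of a Lie
algebra, which extends `killingFiltration` to arbitrary coefficient rings. -/
def isotropyFiltration (H V : Submodule R L) : ℕ → Submodule R L
  | 0 => H
  | j + 1 => H ⊓ lieTransporter L V (isotropyFiltration H V j)

theorem isotropyFiltration_antitone (H V : Submodule R L) : Antitone (isotropyFiltration H V) := by
  refine antitone_nat_of_succ_le fun j => ?_
  induction j with
  | zero => exact inf_le_left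
  | succ j ih => exact inf_le_inf_left H (lieTransporter_mono le_rfl ih)

theorem killingFiltration_eq_isotropyFiltration {𝔨 : Type*} [LieRing 𝔨] [LieAlgebra ℝ 𝔨]
    (K₀ : LieSubalgebra ℝ 𝔨) (V : Submodule ℝ 𝔨) (j : ℕ) :
    killingFiltration 𝔨 K₀ V j = isotropyFiltration K₀.toSubmodule V j := by
  induction j with
  | zero => rfl
  | succ j ih =>
    rw [isotropyFiltration, ← ih]
    rfl

theorem toSubmodule_le_lieTransporter_self (H : LieSubalgebra R L) :
    H.toSubmodule ≤ lieTransporter L H.toSubmodule H.toSubmodule :=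
  fun _ hx _ hy => H.lie_mem hx hy

theorem le_lieTransporter_sup_self {H : LieSubalgebra R L} {V : Submodule R L}
    (hV : H.toSubmodule ≤ lieTransporter L V (V ⊔ H.toSubmodule)) :
    H.toSubmodule ≤ lieTransporter L (V ⊔ H.toSubmodule) (V ⊔ H.toSubmodule) := by
  rw [lieTransporter_sup]
  exact le_inf hV
    ((toSubmodule_le_lieTransporter_self H).trans (lieTransporter_mono le_rfl le_sup_right))

theorem isotropyFiltration_succ_le_lieTransporter_sup {H V : Submodule R L} {j : ℕ}
    (hj : H ≤ lieTransporter L (isotropyFiltration H V j) (isotropyFiltration H V j)) :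
    isotropyFiltration H V (j + 1) ≤ lieTransporter L (V ⊔ H) (isotropyFiltration H V j) := by
  rw [lieTransporter_sup]
  exact le_inf inf_le_right
    ((isotropyFiltration_antitone H V j.le_succ).trans (le_lieTransporter_comm.mp hj))

theorem bracket_K0_Kj_mem_general (H : LieSubalgebra R L) (V : Submodule R L)
    (hbr : ∀ Z ∈ H, ∀ Y ∈ V, ⁅Z, Y⁆ ∈ V ⊔ H.toSubmodule)
    (j : ℕ) (Z Z' : L) (hZ : Z ∈ H) (hZ' : Z' ∈ isotropyFiltration H.toSubmodule V j) :
    ⁅Z, Z'⁆ ∈ isotropyFiltration H.toSubmodule V j := by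
  induction j generalizing Z Z' with
  | zero => exact H.lie_mem hZ hZ'
  | succ j ih =>
    have stable_sup : Z ∈ lieTransporter L (V ⊔ H.toSubmodule) (V ⊔ H.toSubmodule) :=
      le_lieTransporter_sup_self hbr hZ
    have transports_sup :
        Z' ∈ lieTransporter L (V ⊔ H.toSubmodule) (isotropyFiltration H.toSubmodule V j) :=
      isotropyFiltration_succ_le_lieTransporter_sup (fun X hX Y hY => ih X Y hX hY) hZ'
    exact ⟨H.lie_mem hZ hZ'.1, lieTransporter_mono le_sup_left le_rfl
      (lie_mem_lieTransporter stable_sup (fun Y hY => ih Z Y hZ hY) transports_sup)⟩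

end IsotropyFiltration

/-- `⁅K₀, K_j⁆ ⊆ K_j` for all `j ≥ 0`. -/
theorem bracket_K0_Kj_mem {𝔨 : Type*} [LieRing 𝔨] [LieAlgebra ℝ 𝔨]
    (K₀ : LieSubalgebra ℝ 𝔨) (V : Submodule ℝ 𝔨)
    (hbr : ∀ Z ∈ K₀, ∀ Y ∈ V, ⁅Z, Y⁆ ∈ V ⊔ K₀.toSubmodule)
    (j : ℕ) (Z Z' : 𝔨) (hZ : Z ∈ K₀) (hZ' : Z' ∈ killingFiltration 𝔨 K₀ V j) :
    ⁅Z, Z'⁆ ∈ killingFiltration 𝔨 K₀ V j := by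
  rw [killingFiltration_eq_isotropyFiltration] at hZ' ⊢
  exact bracket_K0_Kj_mem_general K₀ V hbr j Z Z' hZ hZ'
end

section
/- Let 𝔨 be a real Lie algebra, K₀ ⊆ 𝔨 a Lie subalgebra, and V ⊆ 𝔨 a linear subspace such that ⁅Z, Y⁆ ∈ V + K₀ for every Z ∈ K₀ and every Y ∈ V, and define K_j as in the Killing filtration. Let F : 𝔨 → 𝔨 be a Lie algebra automorphism such that F(K₀) ⊆ K₀ and F(Y) − Y ∈ K₀ for every Y ∈ V. Then: (i) for every Z ∈ V + K₀ one has F(Z) − Z ∈ K₀; and (ii) for every j ≥ 0 and every Z ∈ K_j one has F(Z) − Z ∈ K_{j+1}. In particular F(K_j) ⊆ K_j for every j ≥ 0. -/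
/-!
Put `D = F - id` and `K_{-1} = V + K₀`. Since `F` respects brackets,
`⁅D Z, Y⁆ = D ⁅Z, Y⁆ - ⁅F Z, D Y⁆`. For `Z ∈ K_j` and `Y ∈ V` we have `⁅Z, Y⁆ ∈ K_{j-1}`, so
`D ⁅Z, Y⁆ ∈ K_j` by induction. Also `⁅F Z, D Y⁆ ∈ K_j`: `F Z = Z + D Z ∈ K_j` by induction,
`D Y ∈ K₀`, and by the Jacobi identity each `K_j` is stable under bracketing with `K₀`.
Hence `D Z ∈ K_{j+1}`.
-/

theorem lie_map_sub_self {R L : Type*} [CommRing R] [LieRing L] [LieAlgebra R L]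
    (F : L →ₗ⁅R⁆ L) (x y : L) :
    ⁅F x - x, y⁆ = (F ⁅x, y⁆ - ⁅x, y⁆) - ⁅F x, F y - y⁆ := by
  rw [LieHom.map_lie, sub_lie, lie_sub]
  abel

theorem map_sub_self_mem_of_mem_sup {R M : Type*} [Ring R] [AddCommGroup M] [Module R M]
    {F : M →ₗ[R] M} {V K : Submodule R M} (hK : ∀ x ∈ K, F x ∈ K)
    (hV : ∀ x ∈ V, F x - x ∈ K) {x : M} (hx : x ∈ V ⊔ K) : F x - x ∈ K := by
  have hsup : V ⊔ K ≤ K.comap (F - LinearMap.id) :=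
    sup_le hV fun y hy => K.sub_mem (hK y hy) hy
  exact hsup hx

section KillingFiltration

variable {𝔨 : Type*} [LieRing 𝔨] [LieAlgebra ℝ 𝔨] {K₀ : LieSubalgebra ℝ 𝔨} {V : Submodule ℝ 𝔨}

theorem mem_killingFiltration_succ {j : ℕ} {Z : 𝔨} :
    Z ∈ killingFiltration 𝔨 K₀ V (j + 1) ↔
      Z ∈ K₀ ∧ ∀ Y ∈ V, ⁅Z, Y⁆ ∈ killingFiltration 𝔨 K₀ V j :=
  Iff.rfl

theorem antitone_killingFiltration : Antitone (killingFiltration 𝔨 K₀ V) := by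
  refine antitone_nat_of_succ_le fun j => ?_
  induction j with
  | zero => exact fun Z hZ => (mem_killingFiltration_succ.mp hZ).1
  | succ j ih =>
    intro Z hZ
    obtain ⟨hZ₀, hZV⟩ := mem_killingFiltration_succ.mp hZ
    exact mem_killingFiltration_succ.mpr ⟨hZ₀, fun Y hY => ih (hZV Y hY)⟩

theorem mem_of_mem_killingFiltration {j : ℕ} {Z : 𝔨} (hZ : Z ∈ killingFiltration 𝔨 K₀ V j) :
    Z ∈ K₀ :=
  antitone_killingFiltration j.zero_le hZ

theorem lie_mem_killingFiltration (hbr : ∀ Z ∈ K₀, ∀ Y ∈ V, ⁅Z, Y⁆ ∈ V ⊔ K₀.toSubmodule)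
    {j : ℕ} {U W : 𝔨} (hU : U ∈ killingFiltration 𝔨 K₀ V j) (hW : W ∈ K₀) :
    ⁅U, W⁆ ∈ killingFiltration 𝔨 K₀ V j := by
  induction j generalizing U W with
  | zero => exact K₀.lie_mem hU hW
  | succ j ih =>
    obtain ⟨hU₀, hUV⟩ := mem_killingFiltration_succ.mp hU
    have hUj : U ∈ killingFiltration 𝔨 K₀ V j := antitone_killingFiltration j.le_succ hU
    refine mem_killingFiltration_succ.mpr ⟨K₀.lie_mem hU₀ hW, fun Y hY => ?_⟩
    obtain ⟨v, hv, k, hk, hvk⟩ := Submodule.mem_sup.mp (hbr W hW Y hY)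
    have jacobi : ⁅⁅U, W⁆, Y⁆ = ⁅U, v⁆ + ⁅U, k⁆ + ⁅⁅U, Y⁆, W⁆ := by
      rw [← lie_add, hvk, lie_lie, ← lie_skew ⁅U, Y⁆ W, sub_eq_add_neg]
    rw [jacobi]
    exact add_mem (add_mem (hUV v hv) (ih hUj hk)) (ih (hUV Y hY) hW)

theorem map_sub_self_mem_killingFiltration_succ_of_lie
    (hbr : ∀ Z ∈ K₀, ∀ Y ∈ V, ⁅Z, Y⁆ ∈ V ⊔ K₀.toSubmodule) {F : 𝔨 →ₗ⁅ℝ⁆ 𝔨}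
    (hFV : ∀ Y ∈ V, F Y - Y ∈ K₀) {j : ℕ} {Z : 𝔨} (hZ : Z ∈ K₀)
    (hFZ : F Z ∈ killingFiltration 𝔨 K₀ V j)
    (hlie : ∀ Y ∈ V, F ⁅Z, Y⁆ - ⁅Z, Y⁆ ∈ killingFiltration 𝔨 K₀ V j) :
    F Z - Z ∈ killingFiltration 𝔨 K₀ V (j + 1) := by
  refine mem_killingFiltration_succ.mpr
    ⟨K₀.sub_mem (mem_of_mem_killingFiltration hFZ) hZ, fun Y hY => ?_⟩
  rw [lie_map_sub_self]
  exact sub_mem (hlie Y hY) (lie_mem_killingFiltration hbr hFZ (hFV Y hY))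

theorem map_sub_self_mem_killingFiltration_succ
    (hbr : ∀ Z ∈ K₀, ∀ Y ∈ V, ⁅Z, Y⁆ ∈ V ⊔ K₀.toSubmodule) {F : 𝔨 →ₗ⁅ℝ⁆ 𝔨}
    (hF0 : ∀ Z ∈ K₀, F Z ∈ K₀) (hFV : ∀ Y ∈ V, F Y - Y ∈ K₀) {j : ℕ} {Z : 𝔨}
    (hZ : Z ∈ killingFiltration 𝔨 K₀ V j) :
    F Z - Z ∈ killingFiltration 𝔨 K₀ V (j + 1) := by
  induction j generalizing Z with
  | zero =>
    exact map_sub_self_mem_killingFiltration_succ_of_lie hbr hFV hZ (hF0 Z hZ) fun Y hY =>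
      map_sub_self_mem_of_mem_sup (F := (F : 𝔨 →ₗ[ℝ] 𝔨)) hF0 hFV (hbr Z hZ Y hY)
  | succ j ih =>
    obtain ⟨hZ₀, hZV⟩ := mem_killingFiltration_succ.mp hZ
    have hsub : F Z - Z ∈ killingFiltration 𝔨 K₀ V (j + 1) :=
      ih (antitone_killingFiltration j.le_succ hZ)
    have hFZ : F Z ∈ killingFiltration 𝔨 K₀ V (j + 1) := (Submodule.sub_mem_iff_left _ hZ).mp hsub
    exact map_sub_self_mem_killingFiltration_succ_of_lie hbr hFV hZ₀ hFZ fun Y hY =>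
      ih (hZV Y hY)

theorem auto_preserves_killingFiltration_general
    (hbr : ∀ Z ∈ K₀, ∀ Y ∈ V, ⁅Z, Y⁆ ∈ V ⊔ K₀.toSubmodule) {F : 𝔨 →ₗ⁅ℝ⁆ 𝔨}
    (hF0 : ∀ Z ∈ K₀, F Z ∈ K₀) (hFV : ∀ Y ∈ V, F Y - Y ∈ K₀) :
    (∀ Z ∈ V ⊔ K₀.toSubmodule, F Z - Z ∈ K₀) ∧
    (∀ j : ℕ, ∀ Z ∈ killingFiltration 𝔨 K₀ V j,
        F Z - Z ∈ killingFiltration 𝔨 K₀ V (j + 1)) ∧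
    (∀ j : ℕ, ∀ Z ∈ killingFiltration 𝔨 K₀ V j, F Z ∈ killingFiltration 𝔨 K₀ V j) := by
  have hsub : ∀ j : ℕ, ∀ Z ∈ killingFiltration 𝔨 K₀ V j,
      F Z - Z ∈ killingFiltration 𝔨 K₀ V (j + 1) :=
    fun _ _ hZ => map_sub_self_mem_killingFiltration_succ hbr hF0 hFV hZ
  refine ⟨fun Z hZ => map_sub_self_mem_of_mem_sup (F := (F : 𝔨 →ₗ[ℝ] 𝔨)) hF0 hFV hZ, hsub,
    fun j Z hZ => ?_⟩
  exact (Submodule.sub_mem_iff_left _ hZ).mp (antitone_killingFiltration j.le_succ (hsub j Z hZ))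

end KillingFiltration

/-- if `F` is a Lie algebra automorphism with `F(K₀) ⊆ K₀` and
`F(Y) − Y ∈ K₀` for all `Y ∈ V`, then (i) `F(Z) − Z ∈ K₀` for all `Z ∈ V + K₀`,
(ii) `F(Z) − Z ∈ K_{j+1}` for all `Z ∈ K_j`, and in particular `F(K_j) ⊆ K_j`. -/
theorem auto_preserves_killingFiltration {𝔨 : Type*} [LieRing 𝔨] [LieAlgebra ℝ 𝔨]
    (K₀ : LieSubalgebra ℝ 𝔨) (V : Submodule ℝ 𝔨)
    (hbr : ∀ Z ∈ K₀, ∀ Y ∈ V, ⁅Z, Y⁆ ∈ V ⊔ K₀.toSubmodule)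
    (F : 𝔨 ≃ₗ⁅ℝ⁆ 𝔨)
    (hF0 : ∀ Z ∈ K₀, F Z ∈ K₀)
    (hFV : ∀ Y ∈ V, F Y - Y ∈ K₀) :
    (∀ Z ∈ V ⊔ K₀.toSubmodule, F Z - Z ∈ K₀) ∧
    (∀ j : ℕ, ∀ Z ∈ killingFiltration 𝔨 K₀ V j,
        F Z - Z ∈ killingFiltration 𝔨 K₀ V (j + 1)) ∧
    (∀ j : ℕ, ∀ Z ∈ killingFiltration 𝔨 K₀ V j, F Z ∈ killingFiltration 𝔨 K₀ V j) :=
  auto_preserves_killingFiltration_general (F := F.toLieHom) hbr hF0 hFV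
end

section
/- Let V be a real inner product space and let B : V × V → V be an ℝ-bilinear map such that B(x, y) = B(y, x) for all x, y ∈ V, and such that for every x ∈ V the linear map y ↦ B(x, y) is skew-adjoint, i.e. ⟪B(x, y), z⟫ = −⟪y, B(x, z)⟫ for all y, z ∈ V. Then B = 0. -/
open RealInnerProductSpace

/-!
The trilinear form `⟪B x y, z⟫` is symmetric in `x, y` and skew in `y, z`. The transposition of
`x` and `z` is both `(1 2)(2 3)(1 2)` and `(2 3)(1 2)(2 3)`: the first factorization makes it act
by `-1`, the second by `1`.
-/

theorem self_eq_neg_of_symm_left_of_skew_right {α A : Type*} [InvolutiveNeg A]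
    {T : α → α → α → A} (hsymm : ∀ x y z, T x y z = T y x z)
    (hskew : ∀ x y z, T x y z = -T x z y) (x y z : α) : T x y z = -T x y z := by
  have swap_eq_neg : T z y x = -T x y z := calc
    T z y x = T y z x := hsymm z y x
    _ = -T y x z := hskew y z x
    _ = -T x y z := by rw [hsymm y x z]
  have swap_eq : T z y x = T x y z := calc
    T z y x = -T z x y := hskew z y x
    _ = -T x z y := by rw [hsymm z x y]
    _ = T x y z := (hskew x y z).symm
  exact swap_eq.symm.trans swap_eq_neg

theorem symm_bilinear_skew_adjoint_eq_zero_general {R V : Type*} [CommRing R] [AddCommGroup V]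
    [Module R V] (h2 : IsSMulRegular V (2 : R)) {g : V →ₗ[R] V →ₗ[R] R} (hg : g.IsSymm)
    (hsep : g.SeparatingLeft) {B : V → V → V} (hsymm : ∀ x y, B x y = B y x)
    (hskew : ∀ x, g.IsSkewAdjoint (B x)) (x y : V) : B x y = 0 := by
  have skew_right (x y z : V) : g (B x y) z = -g (B x z) y := calc
    g (B x y) z = g y (-B x z) := hskew x y z
    _ = -g y (B x z) := map_neg (g y) (B x z)
    _ = -g (B x z) y := congrArg Neg.neg (hg.eq y (B x z))
  have self_eq_neg (z : V) : g (B x y) z = -g (B x y) z :=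
    self_eq_neg_of_symm_left_of_skew_right (T := fun x y z ↦ g (B x y) z)
      (fun x y z ↦ by rw [hsymm x y]) skew_right x y z
  refine h2.right_eq_zero_of_smul (hsep _ fun z ↦ ?_)
  rw [two_smul, map_add, LinearMap.add_apply]
  exact eq_neg_iff_add_eq_zero.mp (self_eq_neg z)

theorem separatingLeft_inner {V : Type*} [NormedAddCommGroup V] [InnerProductSpace ℝ V] :
    (innerₗ V).SeparatingLeft :=
  fun x hx ↦ inner_self_eq_zero.mp (hx x)

/-- a symmetric bilinear map `B : V × V → V` on a real inner
product space all of whose partial maps `y ↦ B(x, y)` are skew-adjoint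
vanishes (the first prolongation of `𝔬(V)` is trivial). -/
theorem symm_bilinear_skew_adjoint_eq_zero {V : Type*} [NormedAddCommGroup V]
    [InnerProductSpace ℝ V]
    (B : V →ₗ[ℝ] V →ₗ[ℝ] V)
    (hsymm : ∀ x y : V, B x y = B y x)
    (hskew : ∀ x y z : V, ⟪B x y, z⟫ = -⟪y, B x z⟫) :
    B = 0 :=
  LinearMap.ext₂ <| symm_bilinear_skew_adjoint_eq_zero_general (.of_ne_zero (two_ne_zero (α := ℝ)))
    isSymm_inner separatingLeft_inner hsymm fun x y z ↦ by simpa using hskew x y z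
end

section
/- Let V be a finite-dimensional real normed vector space. Then there exists an inner product ⟪·,·⟫ on V (a symmetric positive-definite bilinear form) such that every linear map f : V → V satisfying ‖f(v)‖ = ‖v‖ for all v ∈ V also satisfies ⟪f(x), f(y)⟫ = ⟪x, y⟫ for all x, y ∈ V. -/
/-!
The inner product is `⟪x, y⟫ = ∫ φ x * φ y`, where `φ` runs over the unit ball of the dual space,
equipped with the Hausdorff measure of the dual norm in the dimension of the space. This is a Haar
measure, so it is finite on the ball and positive on nonempty open sets: if `⟪x, x⟫ = 0`, then
evaluation at `x` vanishes on the ball, hence everywhere, and `x = 0` by Hahn–Banach. A linear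
isometry induces an isometry of the dual space, which preserves both the unit ball and the
Hausdorff measure, and therefore the inner product.

The second moments of the dual ball thus take the place of the maximal inscribed ellipsoid of
John's argument; the invariance of the latter rests on its uniqueness, that of the former is
immediate.
-/

open Metric MeasureTheory ProbabilityTheory NormedSpace Module
open scoped ENNReal

section SecondMoments

variable {E F : Type*} [NormedAddCommGroup E] [NormedSpace ℝ E] [MeasurableSpace E]
  [OpensMeasurableSpace E] [NormedAddCommGroup F] [NormedSpace ℝ F] [MeasurableSpace F]
  [OpensMeasurableSpace F]

theorem uncenteredCovarianceBilinDual_comm (μ : Measure E) (L₁ L₂ : StrongDual ℝ E) :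
    uncenteredCovarianceBilinDual μ L₁ L₂ = uncenteredCovarianceBilinDual μ L₂ L₁ :=
  real_inner_comm (L₂.toLp μ 2) (L₁.toLp μ 2)

theorem uncenteredCovarianceBilinDual_restrict_self_pos {μ : Measure E} [μ.IsOpenPosMeasure]
    {U : Set E} (hU : IsOpen U) (hU_nonempty : U.Nonempty) (hμ : MemLp id 2 (μ.restrict U))
    {L : StrongDual ℝ E} (hL : L ≠ 0) :
    0 < uncenteredCovarianceBilinDual (μ.restrict U) L L := by
  have hL_memLp : MemLp L 2 (μ.restrict U) := hμ.continuousLinearMap_comp L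
  have h_nonneg : 0 ≤ fun x ↦ L x * L x := fun x ↦ mul_self_nonneg (L x)
  rw [uncenteredCovarianceBilinDual_apply hμ]
  refine (integral_nonneg h_nonneg).lt_of_ne' fun h_zero ↦ hL ?_
  have h_ae : L =ᵐ[μ.restrict U] 0 := by
    rw [integral_eq_zero_iff_of_nonneg h_nonneg (hL_memLp.integrable_mul hL_memLp)] at h_zero
    filter_upwards [h_zero] with x hx using mul_self_eq_zero.mp hx
  have h_eqOn : Set.EqOn L 0 U :=
    Measure.eqOn_open_of_ae_eq h_ae hU L.continuous.continuousOn continuousOn_const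
  have h_ker : L.ker = ⊤ :=
    Submodule.eq_top_of_nonempty_interior' _ (hU_nonempty.mono (interior_maximal h_eqOn hU))
  exact ContinuousLinearMap.coe_injective (LinearMap.ker_eq_top.mp h_ker)

theorem uncenteredCovarianceBilinDual_comp_of_measurePreserving [SecondCountableTopology F]
    {μ : Measure E} {ν : Measure F} {T : E →L[ℝ] F} (hT : MeasurePreserving T μ ν)
    (hμ : MemLp id 2 μ) (L₁ L₂ : StrongDual ℝ F) :
    uncenteredCovarianceBilinDual μ (L₁ ∘L T) (L₂ ∘L T) =
      uncenteredCovarianceBilinDual ν L₁ L₂ := by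
  have hν : MemLp id 2 ν := by
    rw [← hT.map_eq, memLp_map_measure_iff aestronglyMeasurable_id hT.aemeasurable]
    exact hμ.continuousLinearMap_comp T
  rw [uncenteredCovarianceBilinDual_apply hμ, uncenteredCovarianceBilinDual_apply hν,
    ← hT.map_eq, integral_map hT.aemeasurable (by fun_prop)]
  rfl

end SecondMoments

theorem memLp_id_restrict_of_isBounded {E : Type*} [NormedAddCommGroup E] [ProperSpace E]
    [MeasurableSpace E] [OpensMeasurableSpace E] (μ : Measure E) [IsFiniteMeasureOnCompacts μ]
    {s : Set E} (hs : Bornology.IsBounded s) (p : ℝ≥0∞) : MemLp id p (μ.restrict s) := by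
  obtain ⟨R, hsR⟩ := hs.subset_closedBall 0
  suffices MemLp id p (μ.restrict (closedBall 0 R)) from
    this.mono_measure (Measure.restrict_mono_set μ hsR)
  have : IsFiniteMeasure (μ.restrict (closedBall 0 R)) :=
    isFiniteMeasure_restrict.mpr measure_closedBall_lt_top.ne
  refine .of_bound aestronglyMeasurable_id R ?_
  filter_upwards [ae_restrict_mem measurableSet_closedBall] with x hx
  exact mem_closedBall_zero_iff.mp hx

section UnitBallMeasure

variable {E F : Type*} [NormedAddCommGroup E] [NormedSpace ℝ E] [MeasurableSpace E] [BorelSpace E]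
  [NormedAddCommGroup F] [NormedSpace ℝ F] [MeasurableSpace F] [BorelSpace F]

variable (E) in
/-- The Haar measure of a finite-dimensional normed space `E`, restricted to the open unit ball.
The Haar measure is normalized as the Hausdorff measure of dimension `finrank ℝ E`, which makes
the construction natural under linear isometries. -/
noncomputable def unitBallMeasure : Measure E :=
  μH[finrank ℝ E].restrict (ball 0 1)

theorem memLp_id_unitBallMeasure [FiniteDimensional ℝ E] (p : ℝ≥0∞) :
    MemLp id p (unitBallMeasure E) :=
  memLp_id_restrict_of_isBounded _ isBounded_ball p

theorem measurePreserving_unitBallMeasure (e : E ≃ₗᵢ[ℝ] F) :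
    MeasurePreserving e (unitBallMeasure E) (unitBallMeasure F) := by
  have h_hausdorff : MeasurePreserving e μH[finrank ℝ E] μH[finrank ℝ E] :=
    e.toIsometryEquiv.measurePreserving_hausdorffMeasure _
  simpa [unitBallMeasure, e.toLinearEquiv.finrank_eq] using
    h_hausdorff.restrict_preimage (measurableSet_ball (x := (0 : F)) (ε := 1))

end UnitBallMeasure

/-- Precomposition with a linear isometry equivalence, as an isometry between spaces of continuous
linear maps. For `G = 𝕜` this is the dual isometry of `e`. -/
def precompLinearIsometryEquiv {𝕜 E F : Type*} [NontriviallyNormedField 𝕜]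
    [NormedAddCommGroup E] [NormedSpace 𝕜 E] [NormedAddCommGroup F] [NormedSpace 𝕜 F]
    (e : E ≃ₗᵢ[𝕜] F) (G : Type*) [NormedAddCommGroup G] [NormedSpace 𝕜 G] :
    (F →L[𝕜] G) ≃ₗᵢ[𝕜] (E →L[𝕜] G) where
  __ := e.symm.toContinuousLinearEquiv.arrowCongr (.refl 𝕜 G)
  norm_map' φ := φ.opNorm_comp_linearIsometryEquiv e

section DualBallForm

variable {V W : Type*} [NormedAddCommGroup V] [NormedSpace ℝ V] [NormedAddCommGroup W]
  [NormedSpace ℝ W]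

variable (V) in
/-- The second-moment form of the dual unit ball: for finite-dimensional `V`, the bilinear form
`(x, y) ↦ ∫ φ, φ x * φ y ∂unitBallMeasure (StrongDual ℝ V)`. Since `uncenteredCovarianceBilinDual`
lives on the dual of the space carrying the measure, here the bidual of `V`, it is pulled back along
the canonical embedding. -/
noncomputable def dualBallForm : V →L[ℝ] V →L[ℝ] ℝ :=
  (uncenteredCovarianceBilinDual (unitBallMeasure (StrongDual ℝ V))).bilinearComp
    (inclusionInDoubleDual ℝ V) (inclusionInDoubleDual ℝ V)

theorem dualBallForm_comm (x y : V) : dualBallForm V x y = dualBallForm V y x :=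
  uncenteredCovarianceBilinDual_comm _ _ _

variable [FiniteDimensional ℝ V]

theorem dualBallForm_self_pos {x : V} (hx : x ≠ 0) : 0 < dualBallForm V x x :=
  have h_eval : inclusionInDoubleDual ℝ V x ≠ 0 :=
    (map_ne_zero_iff (inclusionInDoubleDual ℝ V) (inclusionInDoubleDualLi ℝ).injective).mpr hx
  uncenteredCovarianceBilinDual_restrict_self_pos isOpen_ball (nonempty_ball.mpr one_pos)
    (memLp_id_unitBallMeasure 2) h_eval

theorem dualBallForm_map (e : V ≃ₗᵢ[ℝ] W) (x y : V) :
    dualBallForm W (e x) (e y) = dualBallForm V x y := by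
  have := e.toLinearEquiv.finiteDimensional
  let T : StrongDual ℝ W ≃ₗᵢ[ℝ] StrongDual ℝ V := precompLinearIsometryEquiv e ℝ
  have hT : MeasurePreserving (T : StrongDual ℝ W →L[ℝ] StrongDual ℝ V) (unitBallMeasure _)
      (unitBallMeasure _) := measurePreserving_unitBallMeasure T
  exact uncenteredCovarianceBilinDual_comp_of_measurePreserving hT (memLp_id_unitBallMeasure 2)
    (inclusionInDoubleDual ℝ V x) (inclusionInDoubleDual ℝ V y)

end DualBallForm

/-- John's ellipsoid argument: on a finite-dimensional real
normed space there is an inner product (a symmetric positive-definite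
bilinear form) invariant under every linear isometry of the norm. -/
theorem exists_invariant_inner_product {V : Type*} [NormedAddCommGroup V]
    [NormedSpace ℝ V] [FiniteDimensional ℝ V] :
    ∃ b : V →ₗ[ℝ] V →ₗ[ℝ] ℝ,
      (∀ x y : V, b x y = b y x) ∧
      (∀ x : V, x ≠ 0 → 0 < b x x) ∧
      (∀ f : V →ₗ[ℝ] V, (∀ v : V, ‖f v‖ = ‖v‖) →
        ∀ x y : V, b (f x) (f y) = b x y) := by
  refine ⟨(dualBallForm V).toLinearMap₁₂, dualBallForm_comm, fun x ↦ dualBallForm_self_pos, ?_⟩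
  intro f hf
  let e : V ≃ₗᵢ[ℝ] V := LinearIsometry.toLinearIsometryEquiv ⟨f, hf⟩ rfl
  exact dualBallForm_map e
end
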